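/- In the linear setting, assume (C1): lim_{n→∞} (1 − h_n)·ln n = 0, and (C2): sup_{k≥0} (b_k − b_{k+1})/b_{k+1} < ∞. Then limsup_{n→∞} sup{ m_n([0,r])/r^{h_n} : r ∈ (0,1) } ≤ 1. -/

import Mathlib

open Set Filter MeasureTheory Topology

noncomputable section

/-- Composition `g_{i₁} ∘ g_{i₂} ∘ ⋯ ∘ g_{i_l}` along a finite word. -/
def wordComp (g : ℕ → ℝ → ℝ) : List ℕ → ℝ → ℝ
  | [] => id
  | k :: w => g k ∘ wordComp g w

/-- The limit set `J_n` of the IFS `S_n = {g_1, …, g_n}`. -/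
def limitSet (g : ℕ → ℝ → ℝ) (n : ℕ) : Set ℝ :=
  ⋂ l : ℕ, ⋃ w ∈ {w : List ℕ | w.length = l + 1 ∧ ∀ i ∈ w, 1 ≤ i ∧ i ≤ n},
    wordComp g w '' Set.Icc (0 : ℝ) 1

/-- The decreasing affine map `g_k(x) = b_{k-1} - (b_{k-1} - b_k)·x`. -/
def gAff (b : ℕ → ℝ) (k : ℕ) (x : ℝ) : ℝ := b (k - 1) - (b (k - 1) - b k) * x

/-- The normalized Hausdorff measure `m_n` on the limit set `J_n`. -/
def normMeas (g : ℕ → ℝ → ℝ) (h : ℕ → ℝ) (n : ℕ) (A : Set ℝ) : ENNReal :=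
  μH[h n] (A ∩ limitSet g n) / μH[h n] (limitSet g n)

/-!
The measure `m_n` satisfies Hutchinson's inequality `m A ≤ ∑ k, a_k ^ h * m (g_k⁻¹ A)`. As each
`g_k` is decreasing, it exchanges the two ends of `[0, 1]`: if `b_k ≤ r < b_{k-1}`, then `[0, r]`
consists of the pieces `j > k`, which fill `[0, b_k]`, and of a part of the piece `k` which is the
image of some `[1 - t, 1]`; intervals `[1 - t, 1]` decompose in the same way. By concavity the full
pieces filling an interval of length `x` have total mass at most `n ^ (1 - h) * x ^ h`. Bernoulli's
inequality shows that a bound `K * y ^ h` on the partial piece then yields the bound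
`K * (x + y) ^ h` on the union, with the *same* constant, as soon as
`n ^ (1 - h) * b_n ^ (h - 1) ≤ h * K`. So the trivial bound `m ≤ K * r ^ h + 1` improves to
`m ≤ K * r ^ h + ρ ^ l` after `l` rounds, with `ρ < 1`.

The constants `K` may be taken arbitrarily close to `1`. Indeed `n ^ (1 - h_n) → 1` is (C1), and
`b_n ^ (h_n - 1) → 1` always holds: comparing `∑ a_k ^ h = 1` with `∑ a_k = 1 - b_n` to first order
gives `1 - h_n = O(b_n)`, while `b_n * log b_n → 0`.
-/

section Powers

variable {h : ℝ}

lemma one_sub_mul_negMulLog_le_rpow_sub_self {a : ℝ} (ha : 0 < a) (h : ℝ) :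
    (1 - h) * a.negMulLog ≤ a ^ h - a := by
  have hpow : a ^ h = a * Real.exp ((h - 1) * Real.log a) := by
    rw [mul_comm (h - 1), ← Real.rpow_def_of_pos ha, Real.rpow_sub_one ha.ne',
      mul_div_cancel₀ _ ha.ne']
  have hexp := mul_le_mul_of_nonneg_left (Real.add_one_le_exp ((h - 1) * Real.log a)) ha.le
  rw [hpow, Real.negMulLog]
  linarith

lemma one_sub_mul_negMulLog_le_one_sub_sum {ι : Type*} {s : Finset ι} {a : ι → ℝ} {i : ι}
    (hi : i ∈ s) (ha : ∀ j ∈ s, a j ∈ Ioc 0 1) (hh : h ≤ 1) (hsum : ∑ j ∈ s, a j ^ h = 1) :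
    (1 - h) * (a i).negMulLog ≤ 1 - ∑ j ∈ s, a j := by
  have hnonneg : ∀ j ∈ s, 0 ≤ (1 - h) * (a j).negMulLog := fun j hj ↦
    mul_nonneg (sub_nonneg.2 hh) (Real.negMulLog_nonneg (ha j hj).1.le (ha j hj).2)
  calc (1 - h) * (a i).negMulLog ≤ ∑ j ∈ s, (1 - h) * (a j).negMulLog :=
        Finset.single_le_sum hnonneg hi
    _ ≤ ∑ j ∈ s, (a j ^ h - a j) :=
        Finset.sum_le_sum fun j hj ↦ one_sub_mul_negMulLog_le_rpow_sub_self (ha j hj).1 h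
    _ = 1 - ∑ j ∈ s, a j := by rw [Finset.sum_sub_distrib, hsum]

lemma le_one_of_sum_rpow_eq_one {ι : Type*} {s : Finset ι} {a : ι → ℝ}
    (ha : ∀ j ∈ s, a j ∈ Icc 0 1) (hlt : ∑ j ∈ s, a j < 1) (hsum : ∑ j ∈ s, a j ^ h = 1) :
    h ≤ 1 := by
  by_contra! hh
  have hle : ∑ j ∈ s, a j ^ h ≤ ∑ j ∈ s, a j := Finset.sum_le_sum fun j hj ↦
    Real.rpow_le_self_of_le_one (ha j hj).1 (ha j hj).2 hh.le
  exact absurd hsum (hle.trans_lt hlt).ne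

lemma sum_rpow_le_card_rpow_mul {ι : Type*} {s : Finset ι} {a : ι → ℝ} (ha : ∀ j ∈ s, 0 ≤ a j)
    (h0 : 0 < h) (h1 : h ≤ 1) :
    ∑ j ∈ s, a j ^ h ≤ (s.card : ℝ) ^ (1 - h) * (∑ j ∈ s, a j) ^ h := by
  have hpow : ∀ j ∈ s, 0 ≤ a j ^ h := fun j hj ↦ Real.rpow_nonneg (ha j hj) h
  have hsum : 0 ≤ ∑ j ∈ s, a j := Finset.sum_nonneg ha
  have holder := Real.rpow_sum_le_const_mul_sum_rpow_of_nonneg s (one_le_inv_iff₀.2 ⟨h0, h1⟩) hpow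
  have hinv : ∑ j ∈ s, (a j ^ h) ^ h⁻¹ = ∑ j ∈ s, a j :=
    Finset.sum_congr rfl fun j hj ↦ Real.rpow_rpow_inv (ha j hj) h0.ne'
  rw [hinv, Real.rpow_inv_le_iff_of_pos (Finset.sum_nonneg hpow) (by positivity) h0,
    Real.mul_rpow (by positivity) hsum, ← Real.rpow_mul (by positivity)] at holder
  rwa [sub_mul, inv_mul_cancel₀ h0.ne', one_mul] at holder

lemma mul_rpow_add_mul_one_sub_rpow_le {N K δ u : ℝ} (hN : 0 ≤ N) (hK : 0 ≤ K) (hδ : 0 < δ)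
    (h0 : 0 ≤ h) (h1 : h ≤ 1) (hNK : N * δ ^ (h - 1) ≤ h * K) (hu : u ∈ Icc δ 1) :
    N * u ^ h + K * (1 - u) ^ h ≤ K := by
  have hu0 : 0 < u := hδ.trans_le hu.1
  have hpow : u ^ h ≤ u * δ ^ (h - 1) := by
    calc u ^ h = u * u ^ (h - 1) := by rw [Real.rpow_sub_one hu0.ne', mul_div_cancel₀ _ hu0.ne']
      _ ≤ u * δ ^ (h - 1) := by
        have := Real.rpow_le_rpow_of_nonpos hδ hu.1 (sub_nonpos.2 h1)
        gcongr
  have bernoulli : (1 - u) ^ h ≤ 1 - h * u := by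
    simpa [sub_eq_add_neg] using
      rpow_one_add_le_one_add_mul_self (s := -u) (by linarith [hu.2]) h0 h1
  calc N * u ^ h + K * (1 - u) ^ h ≤ N * (u * δ ^ (h - 1)) + K * (1 - h * u) := by gcongr
    _ = u * (N * δ ^ (h - 1)) + K * (1 - h * u) := by ring
    _ ≤ u * (h * K) + K * (1 - h * u) := by gcongr
    _ = K := by ring

lemma mul_rpow_add_mul_rpow_le {N K δ x y : ℝ} (hN : 0 ≤ N) (hK : 0 ≤ K) (hδ : 0 < δ)
    (h0 : 0 ≤ h) (h1 : h ≤ 1) (hNK : N * δ ^ (h - 1) ≤ h * K) (hx : δ ≤ x) (hy : 0 ≤ y)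
    (hxy : x + y ≤ 1) : N * x ^ h + K * y ^ h ≤ K * (x + y) ^ h := by
  have hr : 0 < x + y := by linarith
  have hu : x / (x + y) ∈ Icc δ 1 :=
    ⟨(le_div_iff₀ hr).2 ((mul_le_of_le_one_right hδ.le hxy).trans hx),
      (div_le_one hr).2 (by linarith)⟩
  have hscale : ∀ z, 0 ≤ z → (z / (x + y)) ^ h * (x + y) ^ h = z ^ h := fun z hz ↦ by
    rw [← Real.mul_rpow (by positivity) hr.le, div_mul_cancel₀ _ hr.ne']
  have hcompl : 1 - x / (x + y) = y / (x + y) := by field_simp; ring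
  have hbound := mul_le_mul_of_nonneg_right
    (mul_rpow_add_mul_one_sub_rpow_le hN hK hδ h0 h1 hNK hu) (Real.rpow_nonneg hr.le h)
  rwa [hcompl, add_mul, mul_assoc, mul_assoc, hscale x (hδ.le.trans hx), hscale y hy] at hbound

lemma rpow_mul_div_rpow_add {a y : ℝ} (ha : 0 < a) (hy : 0 ≤ y) (K e : ℝ) :
    a ^ h * (K * (y / a) ^ h + e) = K * y ^ h + a ^ h * e := by
  rw [Real.div_rpow hy ha.le]
  field_simp

end Powers

section Gaps

variable {b : ℕ → ℝ} {h : ℝ}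

lemma sum_Ioc_gap (b : ℕ → ℝ) {i j : ℕ} (hij : i ≤ j) :
    ∑ k ∈ Finset.Ioc i j, (b (k - 1) - b k) = b i - b j := by
  induction j, hij using Nat.le_induction with
  | base => simp
  | succ j hij ih => rw [Finset.sum_Ioc_succ_top hij, ih, add_tsub_cancel_right, sub_add_sub_cancel]

lemma sum_Ioc_gap_rpow_le (hb : Antitone b) (h0 : 0 < h) (h1 : h ≤ 1) {i j n : ℕ} (hij : i ≤ j)
    (hjn : j ≤ n) :
    ∑ k ∈ Finset.Ioc i j, (b (k - 1) - b k) ^ h ≤ (n : ℝ) ^ (1 - h) * (b i - b j) ^ h := by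
  have hgap : ∀ k ∈ Finset.Ioc i j, 0 ≤ b (k - 1) - b k := fun k _ ↦
    sub_nonneg.2 (hb (Nat.sub_le k 1))
  have hcard : (Finset.Ioc i j).card ≤ n := by rw [Nat.card_Ioc]; omega
  have hb_le : 0 ≤ b i - b j := sub_nonneg.2 (hb hij)
  calc ∑ k ∈ Finset.Ioc i j, (b (k - 1) - b k) ^ h
      ≤ ((Finset.Ioc i j).card : ℝ) ^ (1 - h) * (b i - b j) ^ h := by
        rw [← sum_Ioc_gap b hij]
        exact sum_rpow_le_card_rpow_mul hgap h0 h1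
    _ ≤ (n : ℝ) ^ (1 - h) * (b i - b j) ^ h := by
        have : 0 ≤ 1 - h := sub_nonneg.2 h1
        gcongr

lemma gap_mem_Ioc (hb : StrictAnti b) (hb0 : b 0 = 1) {n : ℕ} (hbn : 0 ≤ b n) {k : ℕ}
    (hk : k ∈ Finset.Ioc 0 n) : b (k - 1) - b k ∈ Ioc 0 1 := by
  obtain ⟨hk0, hkn⟩ := Finset.mem_Ioc.1 hk
  have hlt : b k < b (k - 1) := hb (Nat.sub_lt hk0 one_pos)
  have hle : b (k - 1) ≤ b 0 := hb.antitone (Nat.zero_le _)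
  have hge : b n ≤ b k := hb.antitone hkn
  constructor <;> linarith

lemma moran_exponent_le_one (hb : StrictAnti b) (hb0 : b 0 = 1) {n : ℕ} (hbn : 0 < b n)
    (hmoran : ∑ k ∈ Finset.Ioc 0 n, (b (k - 1) - b k) ^ h = 1) : h ≤ 1 := by
  refine le_one_of_sum_rpow_eq_one
    (fun k hk ↦ Ioc_subset_Icc_self (gap_mem_Ioc hb hb0 hbn.le hk)) ?_ hmoran
  rw [sum_Ioc_gap b n.zero_le, hb0]
  linarith

lemma one_sub_moran_exponent_mul_le (hb : StrictAnti b) (hb0 : b 0 = 1) {n : ℕ} (hn : 0 < n)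
    (hbn : 0 < b n) (hmoran : ∑ k ∈ Finset.Ioc 0 n, (b (k - 1) - b k) ^ h = 1) :
    (1 - h) * (1 - b 1).negMulLog ≤ b n := by
  have hbound := one_sub_mul_negMulLog_le_one_sub_sum (Finset.mem_Ioc.2 ⟨one_pos, hn⟩)
    (fun k hk ↦ gap_mem_Ioc hb hb0 hbn.le hk) (moran_exponent_le_one hb hb0 hbn hmoran) hmoran
  rwa [sum_Ioc_gap b n.zero_le, tsub_self, hb0, sub_sub_cancel] at hbound

end Gaps

section LimitSet

/-- The Hutchinson operator `A ↦ ⋃ i ∈ s, g i '' A` of the iterated function system `(g i)_{i ∈ s}`;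
limit sets are its fixed points. -/
def hutchinson {ι X : Type*} (g : ι → X → X) (s : Finset ι) (A : Set X) : Set X :=
  ⋃ i ∈ s, g i '' A

lemma hutchinson_mono {ι X : Type*} (g : ι → X → X) (s : Finset ι) : Monotone (hutchinson g s) :=
  fun _ _ hAB ↦ iUnion₂_mono fun _ _ ↦ image_mono hAB

lemma hutchinson_iInter_of_antitone {ι X : Type*} {g : ι → X → X} {s : Finset ι}
    (hg : ∀ i ∈ s, Function.Injective (g i)) {A : ℕ → Set X} (hA : Antitone A) :
    hutchinson g s (⋂ l, A l) = ⋂ l, hutchinson g s (A l) := by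
  have himage : ∀ i : s, g i '' ⋂ l, A l = ⋂ l, g i '' A l := fun i ↦
    (hg i i.2).injOn.image_iInter_eq
  have hanti : ∀ i : s, Antitone fun l ↦ g i '' A l := fun i _ _ hlm ↦ image_mono (hA hlm)
  simp only [hutchinson, ← Finset.mem_coe, biUnion_eq_iUnion]
  simp_rw [himage]
  exact (iInter_iUnion_of_antitone hanti).symm

lemma iUnion_wordComp_image (g : ℕ → ℝ → ℝ) (n l : ℕ) :
    ⋃ w ∈ {w : List ℕ | w.length = l ∧ ∀ i ∈ w, 1 ≤ i ∧ i ≤ n}, wordComp g w '' Icc (0 : ℝ) 1 =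
      (hutchinson g (Finset.Ioc 0 n))^[l] (Icc 0 1) := by
  induction l with
  | zero => ext x; simp +contextual [wordComp, List.length_eq_zero_iff]
  | succ l ih =>
    rw [Function.iterate_succ_apply', ← ih]
    ext x
    simp only [hutchinson, mem_iUnion, mem_image, exists_prop, mem_ofPred_eq, Finset.mem_Ioc]
    constructor
    · rintro ⟨_ | ⟨k, w⟩, ⟨hlen, hw⟩, y, hy, rfl⟩
      · simp at hlen
      · obtain ⟨hk, hw⟩ := List.forall_mem_cons.1 hw
        exact ⟨k, hk, _, ⟨w, ⟨Nat.succ.inj hlen, hw⟩, y, hy, rfl⟩, rfl⟩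
    · rintro ⟨k, hk, _, ⟨w, ⟨hlen, hw⟩, y, hy, rfl⟩, rfl⟩
      exact ⟨k :: w, ⟨congrArg Nat.succ hlen, List.forall_mem_cons.2 ⟨hk, hw⟩⟩, y, hy, rfl⟩

variable {g : ℕ → ℝ → ℝ} {n : ℕ}

lemma antitone_iterate_hutchinson (hg : ∀ k ∈ Finset.Ioc 0 n, MapsTo (g k) (Icc 0 1) (Icc 0 1)) :
    Antitone fun l ↦ (hutchinson g (Finset.Ioc 0 n))^[l] (Icc 0 1) :=
  (hutchinson_mono g _).antitone_iterate_of_map_le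
    (iUnion₂_subset fun k hk ↦ (hg k hk).image_subset)

lemma limitSet_eq_iInter (hg : ∀ k ∈ Finset.Ioc 0 n, MapsTo (g k) (Icc 0 1) (Icc 0 1)) :
    limitSet g n = ⋂ l, (hutchinson g (Finset.Ioc 0 n))^[l] (Icc 0 1) := by
  simp_rw [limitSet, iUnion_wordComp_image]
  exact (antitone_iterate_hutchinson hg).iInter_nat_add 1

lemma limitSet_subset_Icc (hg : ∀ k ∈ Finset.Ioc 0 n, MapsTo (g k) (Icc 0 1) (Icc 0 1)) :
    limitSet g n ⊆ Icc 0 1 :=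
  (limitSet_eq_iInter hg).trans_subset (iInter_subset _ 0)

lemma hutchinson_limitSet (hg : ∀ k ∈ Finset.Ioc 0 n, MapsTo (g k) (Icc 0 1) (Icc 0 1))
    (hinj : ∀ k ∈ Finset.Ioc 0 n, Function.Injective (g k)) :
    hutchinson g (Finset.Ioc 0 n) (limitSet g n) = limitSet g n := by
  have hanti := antitone_iterate_hutchinson hg
  rw [limitSet_eq_iInter hg, hutchinson_iInter_of_antitone hinj hanti]
  simp_rw [← Function.iterate_succ_apply']
  exact hanti.iInter_nat_add 1

end LimitSet

section HausdorffMeasure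

variable {ι X : Type*} [EMetricSpace X] [MeasurableSpace X] [BorelSpace X] {g : ι → X → X}
  {s : Finset ι} {c : ι → NNReal} {d : ℝ} {J : Set X}

lemma restrict_hausdorffMeasure_le_sum_map (hd : 0 ≤ d)
    (hg : ∀ i ∈ s, LipschitzWith (c i) (g i)) (hJ : J ⊆ hutchinson g s J) :
    (μH[d] : Measure X).restrict J ≤
      ∑ i ∈ s, (c i : ENNReal) ^ d • ((μH[d] : Measure X).restrict J).map (g i) := by
  refine Measure.le_iff.2 fun A hA ↦ ?_
  have hcover : A ∩ J ⊆ ⋃ i ∈ s, g i '' (g i ⁻¹' A ∩ J) := fun x hx ↦ by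
    obtain ⟨i, hi, y, hy, rfl⟩ := mem_iUnion₂.1 (hJ hx.2)
    exact mem_iUnion₂.2 ⟨i, hi, y, ⟨hx.1, hy⟩, rfl⟩
  have hmeas : ∀ i ∈ s, Measurable (g i) := fun i hi ↦ (hg i hi).continuous.measurable
  calc (μH[d] : Measure X).restrict J A
      = μH[d] (A ∩ J) := Measure.restrict_apply hA
    _ ≤ ∑ i ∈ s, μH[d] (g i '' (g i ⁻¹' A ∩ J)) :=
        (measure_mono hcover).trans (measure_biUnion_finset_le _ _)
    _ ≤ ∑ i ∈ s, (c i : ENNReal) ^ d * μH[d] (g i ⁻¹' A ∩ J) :=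
        Finset.sum_le_sum fun i hi ↦ (hg i hi).hausdorffMeasure_image_le hd _
    _ = (∑ i ∈ s, (c i : ENNReal) ^ d • ((μH[d] : Measure X).restrict J).map (g i)) A := by
        rw [Measure.finsetSum_apply]
        refine Finset.sum_congr rfl fun i hi ↦ ?_
        rw [Measure.smul_apply, Measure.map_apply (hmeas i hi) hA,
          Measure.restrict_apply (hmeas i hi hA), smul_eq_mul]

lemma cond_hausdorffMeasure_le_sum_map (hd : 0 ≤ d)
    (hg : ∀ i ∈ s, LipschitzWith (c i) (g i)) (hJ : J ⊆ hutchinson g s J) :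
    ProbabilityTheory.cond (μH[d] : Measure X) J ≤
      ∑ i ∈ s, (c i : ENNReal) ^ d • (ProbabilityTheory.cond (μH[d] : Measure X) J).map (g i) := by
  simp_rw [ProbabilityTheory.cond, Measure.map_smul, smul_comm (_ ^ d), ← Finset.smul_sum]
  gcongr
  exact restrict_hausdorffMeasure_le_sum_map hd hg hJ

lemma normMeas_eq_cond (g : ℕ → ℝ → ℝ) (h : ℕ → ℝ) (n : ℕ) {A : Set ℝ} (hA : MeasurableSet A) :
    normMeas g h n A = ProbabilityTheory.cond μH[h n] (limitSet g n) A := by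
  rw [ProbabilityTheory.cond_apply' hA, normMeas, inter_comm, ENNReal.div_eq_inv_mul]

end HausdorffMeasure

section AffineMaps

variable {b : ℕ → ℝ}

lemma gAff_mem_Icc (hb : Antitone b) (k : ℕ) {x : ℝ} (hx : x ∈ Icc 0 1) :
    gAff b k x ∈ Icc (b k) (b (k - 1)) := by
  have hgap : 0 ≤ b (k - 1) - b k := sub_nonneg.2 (hb (Nat.sub_le k 1))
  have hle := mul_le_of_le_one_right hgap hx.2
  have hge := mul_nonneg hgap hx.1
  rw [gAff]
  constructor <;> linarith

lemma lipschitzWith_gAff (hb : Antitone b) (k : ℕ) :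
    LipschitzWith (b (k - 1) - b k).toNNReal (gAff b k) := by
  have hgap : 0 ≤ b (k - 1) - b k := sub_nonneg.2 (hb (Nat.sub_le k 1))
  refine LipschitzWith.of_dist_le_mul fun x y ↦ le_of_eq ?_
  rw [Real.coe_toNNReal _ hgap, gAff, gAff, dist_sub_left, Real.dist_eq, Real.dist_eq, ← mul_sub,
    abs_mul, abs_of_nonneg hgap]

lemma gAff_injective (hb : StrictAnti b) {k : ℕ} (hk : 0 < k) : Function.Injective (gAff b k) := by
  have hgap : b (k - 1) - b k ≠ 0 := (sub_pos.2 (hb (Nat.sub_lt hk one_pos))).ne'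
  intro x y hxy
  exact mul_left_cancel₀ hgap (sub_right_injective hxy)

end AffineMaps

/-- `μ` is carried by `[0, 1]` and dominated by the Hutchinson average of its images under
`g_1, …, g_n`, the piece `k` having weight `a_k ^ h`. Asking for an inequality rather than an
equality avoids the overlaps of the pieces. -/
structure IsSubselfsimilar (b : ℕ → ℝ) (n : ℕ) (h : ℝ) (μ : Measure ℝ) : Prop where
  measure_compl_Icc : μ (Icc 0 1)ᶜ = 0
  le_sum_map : μ ≤ ∑ k ∈ Finset.Ioc 0 n, ENNReal.ofReal ((b (k - 1) - b k) ^ h) • μ.map (gAff b k)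

lemma isSubselfsimilar_cond_hausdorffMeasure {b : ℕ → ℝ} {n : ℕ} {h : ℝ} (hb : StrictAnti b)
    (hb0 : b 0 = 1) (hbn : 0 ≤ b n) (hh : 0 ≤ h) :
    IsSubselfsimilar b n h (ProbabilityTheory.cond μH[h] (limitSet (gAff b) n)) := by
  have hmaps : ∀ k ∈ Finset.Ioc 0 n, MapsTo (gAff b k) (Icc 0 1) (Icc 0 1) := fun k hk x hx ↦
    Icc_subset_Icc (hbn.trans (hb.antitone (Finset.mem_Ioc.1 hk).2))
      (hb0 ▸ hb.antitone (Nat.zero_le _)) (gAff_mem_Icc hb.antitone k hx)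
  have hinj : ∀ k ∈ Finset.Ioc 0 n, Function.Injective (gAff b k) := fun k hk ↦
    gAff_injective hb (Finset.mem_Ioc.1 hk).1
  constructor
  · rw [ProbabilityTheory.cond_apply' measurableSet_Icc.compl,
      (disjoint_compl_right_iff_subset.2 (limitSet_subset_Icc hmaps)).inter_eq, measure_empty,
      mul_zero]
  · refine (cond_hausdorffMeasure_le_sum_map hh (fun k _ ↦ lipschitzWith_gAff hb.antitone k)
      (hutchinson_limitSet hmaps hinj).ge).trans_eq (Finset.sum_congr rfl fun k hk ↦ ?_)
    rw [← ENNReal.ofReal_rpow_of_nonneg (gap_mem_Ioc hb hb0 hbn hk).1.le hh, ENNReal.ofReal]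

namespace IsSubselfsimilar

variable {b : ℕ → ℝ} {n : ℕ} {h : ℝ} {μ : Measure ℝ} [IsZeroOrProbabilityMeasure μ]

lemma measureReal_le_of_inter_subset (hμ : IsSubselfsimilar b n h μ) {A B : Set ℝ}
    (hAB : A ∩ Icc 0 1 ⊆ B) : μ.real A ≤ μ.real B := by
  rw [← measureReal_inter_add_sdiff (s := A) measurableSet_Icc, measureReal_def μ (A \ Icc 0 1),
    measure_mono_null (fun _ hx ↦ hx.2) hμ.measure_compl_Icc, ENNReal.toReal_zero, add_zero]
  exact measureReal_mono hAB

lemma measureReal_le_sum (hμ : IsSubselfsimilar b n h μ) (hb : Antitone b) {A : Set ℝ}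
    (hA : MeasurableSet A) :
    μ.real A ≤ ∑ k ∈ Finset.Ioc 0 n, (b (k - 1) - b k) ^ h * μ.real (gAff b k ⁻¹' A) := by
  have hmeas : ∀ k, Measurable (gAff b k) := fun k ↦ (lipschitzWith_gAff hb k).continuous.measurable
  have hgap : ∀ k, 0 ≤ (b (k - 1) - b k) ^ h := fun k ↦
    Real.rpow_nonneg (sub_nonneg.2 (hb (Nat.sub_le k 1))) h
  have hle := hμ.le_sum_map A
  simp only [Measure.finsetSum_apply, Measure.smul_apply, Measure.map_apply (hmeas _) hA,
    smul_eq_mul] at hle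
  have hfin : ∀ k ∈ Finset.Ioc 0 n,
      ENNReal.ofReal ((b (k - 1) - b k) ^ h) * μ (gAff b k ⁻¹' A) ≠ ⊤ := fun k _ ↦
    ENNReal.mul_ne_top ENNReal.ofReal_ne_top (measure_ne_top μ _)
  have hreal := ENNReal.toReal_mono (ENNReal.sum_ne_top.2 hfin) hle
  simpa only [measureReal_def, ENNReal.toReal_sum hfin, ENNReal.toReal_mul,
    ENNReal.toReal_ofReal (hgap _)] using hreal

lemma measureReal_le_sum_of_disjoint (hμ : IsSubselfsimilar b n h μ) (hb : Antitone b)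
    {A : Set ℝ} (hA : MeasurableSet A) {s : Finset ℕ} (hs : s ⊆ Finset.Ioc 0 n)
    (hdisj : ∀ j ∈ Finset.Ioc 0 n, j ∉ s → Disjoint A (Icc (b j) (b (j - 1)))) :
    μ.real A ≤ ∑ k ∈ s, (b (k - 1) - b k) ^ h * μ.real (gAff b k ⁻¹' A) := by
  refine (hμ.measureReal_le_sum hb hA).trans_eq (Finset.sum_subset hs fun j hj hjs ↦ ?_).symm
  have hempty : gAff b j ⁻¹' A ∩ Icc 0 1 ⊆ ∅ := fun x hx ↦
    disjoint_left.1 (hdisj j hj hjs) hx.1 (gAff_mem_Icc hb j hx.2)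
  have hle := hμ.measureReal_le_of_inter_subset hempty
  rw [measureReal_empty] at hle
  rw [hle.antisymm measureReal_nonneg, mul_zero]

lemma measureReal_le_sum_add (hμ : IsSubselfsimilar b n h μ) (hb : Antitone b) {A B : Set ℝ}
    (hA : MeasurableSet A) {s : Finset ℕ} {k : ℕ} (hks : k ∉ s) (hs : insert k s ⊆ Finset.Ioc 0 n)
    (hdisj : ∀ j ∈ Finset.Ioc 0 n, j ∉ insert k s → Disjoint A (Icc (b j) (b (j - 1))))
    (hB : gAff b k ⁻¹' A ∩ Icc 0 1 ⊆ B) :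
    μ.real A ≤ ∑ j ∈ s, (b (j - 1) - b j) ^ h + (b (k - 1) - b k) ^ h * μ.real B := by
  have hgap : ∀ j, 0 ≤ (b (j - 1) - b j) ^ h := fun j ↦
    Real.rpow_nonneg (sub_nonneg.2 (hb (Nat.sub_le j 1))) h
  refine (hμ.measureReal_le_sum_of_disjoint hb hA hs hdisj).trans ?_
  rw [Finset.sum_insert hks, add_comm]
  exact add_le_add
    (Finset.sum_le_sum fun j _ ↦ mul_le_of_le_one_right (hgap j) measureReal_le_one)
    (mul_le_mul_of_nonneg_left (hμ.measureReal_le_of_inter_subset hB) (hgap k))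

lemma measureReal_Icc_zero_eq_zero (hμ : IsSubselfsimilar b n h μ) (hb : Antitone b) {r : ℝ}
    (hr : r < b n) : μ.real (Icc 0 r) = 0 := by
  refine le_antisymm ?_ measureReal_nonneg
  refine (hμ.measureReal_le_sum_of_disjoint hb measurableSet_Icc (Finset.empty_subset _)
    fun j hj _ ↦ disjoint_left.2 fun x hx hxj ↦ ?_).trans_eq Finset.sum_empty
  have hbj : b n ≤ b j := hb (Finset.mem_Ioc.1 hj).2
  linarith [hx.2, hxj.1]

lemma measureReal_Icc_zero_le_sum_add (hμ : IsSubselfsimilar b n h μ) (hb : StrictAnti b)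
    {k : ℕ} (hk : k < n) {r : ℝ} (hr : r < b k) :
    μ.real (Icc 0 r) ≤ ∑ j ∈ Finset.Ioc (k + 1) n, (b (j - 1) - b j) ^ h +
      (b k - b (k + 1)) ^ h * μ.real (Icc (1 - (r - b (k + 1)) / (b k - b (k + 1))) 1) := by
  have hgap : 0 < b k - b (k + 1) := sub_pos.2 (hb k.lt_succ_self)
  refine hμ.measureReal_le_sum_add (k := k + 1) hb.antitone measurableSet_Icc (by simp)
    (fun j ↦ by simp only [Finset.mem_insert, Finset.mem_Ioc]; omega)
    (fun j hj hjs ↦ disjoint_left.2 fun x hx hxj ↦ ?_) fun x ⟨hx, hx1⟩ ↦ ⟨?_, hx1.2⟩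
  · simp only [Finset.mem_insert, Finset.mem_Ioc] at hj hjs
    have hbj : b k ≤ b j := hb.antitone (by omega)
    linarith [hx.2, hxj.1]
  · have hxr : gAff b (k + 1) x ≤ r := hx.2
    rw [gAff, add_tsub_cancel_right] at hxr
    rw [sub_le_comm, le_div_iff₀ hgap]
    linarith

lemma measureReal_Icc_one_le_sum_add (hμ : IsSubselfsimilar b n h μ) (hb : StrictAnti b)
    {k : ℕ} (hk : k < n) {u : ℝ} (hu : b (k + 1) < u) :
    μ.real (Icc u 1) ≤ ∑ j ∈ Finset.Ioc 0 k, (b (j - 1) - b j) ^ h +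
      (b k - b (k + 1)) ^ h * μ.real (Icc 0 ((b k - u) / (b k - b (k + 1)))) := by
  have hgap : 0 < b k - b (k + 1) := sub_pos.2 (hb k.lt_succ_self)
  refine hμ.measureReal_le_sum_add (k := k + 1) hb.antitone measurableSet_Icc (by simp)
    (fun j ↦ by simp only [Finset.mem_insert, Finset.mem_Ioc]; omega)
    (fun j hj hjs ↦ disjoint_left.2 fun x hx hxj ↦ ?_) fun x ⟨hx, hx1⟩ ↦ ⟨hx1.1, ?_⟩
  · simp only [Finset.mem_insert, Finset.mem_Ioc] at hj hjs
    have hbj : b (j - 1) ≤ b (k + 1) := hb.antitone (by omega)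
    linarith [hx.1, hxj.2]
  · have hux : u ≤ gAff b (k + 1) x := hx.1
    rw [gAff, add_tsub_cancel_right] at hux
    rw [le_div_iff₀ hgap]
    linarith

end IsSubselfsimilar

/-- The standing data of the recursion between the two ends of `[0, 1]`: a positive Moran exponent
`h` of `g_1, …, g_n` and a constant `K` large enough to be reproduced by the recursion. -/
structure IsDensityConstant (b : ℕ → ℝ) (n : ℕ) (h K : ℝ) : Prop where
  strictAnti : StrictAnti b
  zero_eq_one : b 0 = 1
  last_pos : 0 < b n
  last_le : b n ≤ 1 - b 1
  exponent_pos : 0 < h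
  moran : ∑ k ∈ Finset.Ioc 0 n, (b (k - 1) - b k) ^ h = 1
  mul_rpow_le : (n : ℝ) ^ (1 - h) * b n ^ (h - 1) ≤ h * K

namespace IsDensityConstant

variable {b : ℕ → ℝ} {n : ℕ} {h K : ℝ}

lemma exponent_le_one (hK : IsDensityConstant b n h K) : h ≤ 1 :=
  moran_exponent_le_one hK.strictAnti hK.zero_eq_one hK.last_pos hK.moran

lemma le_one (hK : IsDensityConstant b n h K) (k : ℕ) : b k ≤ 1 :=
  hK.zero_eq_one ▸ hK.strictAnti.antitone k.zero_le

lemma last_le_of_le (hK : IsDensityConstant b n h K) {k : ℕ} (hk : k ≤ n) : b n ≤ b k :=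
  hK.strictAnti.antitone hk

lemma nonneg (hK : IsDensityConstant b n h K) : 0 ≤ K := by
  have hbn := hK.last_pos
  exact nonneg_of_mul_nonneg_right (le_trans (by positivity) hK.mul_rpow_le) hK.exponent_pos

lemma natCast_rpow_le (hK : IsDensityConstant b n h K) : (n : ℝ) ^ (1 - h) ≤ K :=
  calc (n : ℝ) ^ (1 - h) ≤ (n : ℝ) ^ (1 - h) * b n ^ (h - 1) :=
        le_mul_of_one_le_right (by positivity)
          (Real.one_le_rpow_of_pos_of_le_one_of_nonpos hK.last_pos (hK.le_one n)
            (sub_nonpos.2 hK.exponent_le_one))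
    _ ≤ h * K := hK.mul_rpow_le
    _ ≤ K := mul_le_of_le_one_left hK.nonneg hK.exponent_le_one

lemma one_le_mul_rpow (hK : IsDensityConstant b n h K) {t : ℝ} (ht : 1 - b n ≤ t) :
    1 ≤ K * t ^ h := by
  have hbn : 0 ≤ 1 - b n := sub_nonneg.2 (hK.le_one n)
  have hsum := sum_Ioc_gap_rpow_le hK.strictAnti.antitone hK.exponent_pos hK.exponent_le_one
    n.zero_le le_rfl
  rw [hK.moran, hK.zero_eq_one] at hsum
  exact hsum.trans (mul_le_mul hK.natCast_rpow_le (Real.rpow_le_rpow hbn ht hK.exponent_pos.le)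
    (Real.rpow_nonneg hbn h) hK.nonneg)

lemma gap_rpow_le (hK : IsDensityConstant b n h K) {k : ℕ} (hk : k < n) :
    (b k - b (k + 1)) ^ h ≤ (1 - b n) ^ h :=
  Real.rpow_le_rpow (sub_nonneg.2 (hK.strictAnti.antitone k.le_succ))
    (sub_le_sub (hK.le_one k) (hK.last_le_of_le hk)) hK.exponent_pos.le

lemma natCast_rpow_mul_rpow_add_le (hK : IsDensityConstant b n h K) {x y : ℝ} (hx : b n ≤ x)
    (hy : 0 ≤ y) (hxy : x + y ≤ 1) :
    (n : ℝ) ^ (1 - h) * x ^ h + K * y ^ h ≤ K * (x + y) ^ h :=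
  mul_rpow_add_mul_rpow_le (by positivity) hK.nonneg hK.last_pos hK.exponent_pos.le
    hK.exponent_le_one hK.mul_rpow_le hx hy hxy

lemma sum_left_pieces_add_le (hK : IsDensityConstant b n h K) {k : ℕ} (hk : k ≤ n) {r : ℝ}
    (hr : r ∈ Icc (b k) 1) :
    ∑ j ∈ Finset.Ioc k n, (b (j - 1) - b j) ^ h + K * (r - b k) ^ h ≤ K * r ^ h := by
  have hbk : b n ≤ b k := hK.last_le_of_le hk
  have hsum : ∑ j ∈ Finset.Ioc k n, (b (j - 1) - b j) ^ h ≤ (n : ℝ) ^ (1 - h) * b k ^ h := by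
    refine (sum_Ioc_gap_rpow_le hK.strictAnti.antitone hK.exponent_pos hK.exponent_le_one hk
      le_rfl).trans (mul_le_mul_of_nonneg_left ?_ (by positivity))
    exact Real.rpow_le_rpow (sub_nonneg.2 hbk) (sub_le_self _ hK.last_pos.le) hK.exponent_pos.le
  have hadd := hK.natCast_rpow_mul_rpow_add_le hbk (sub_nonneg.2 hr.1)
    ((add_sub_cancel (b k) r).trans_le hr.2)
  rw [add_sub_cancel] at hadd
  linarith

lemma sum_right_pieces_add_le (hK : IsDensityConstant b n h K) {k : ℕ} (hk : k ≤ n) {t : ℝ}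
    (ht : t ∈ Icc (1 - b k) 1) :
    ∑ j ∈ Finset.Ioc 0 k, (b (j - 1) - b j) ^ h + K * (t - (1 - b k)) ^ h ≤ K * t ^ h := by
  rcases k.eq_zero_or_pos with rfl | hk0
  · simp [hK.zero_eq_one]
  have hx : b n ≤ 1 - b k := by linarith [hK.last_le, hK.strictAnti.antitone hk0]
  have hsum := sum_Ioc_gap_rpow_le hK.strictAnti.antitone hK.exponent_pos hK.exponent_le_one
    k.zero_le hk
  have hadd := hK.natCast_rpow_mul_rpow_add_le hx (sub_nonneg.2 ht.1)
    ((add_sub_cancel (1 - b k) t).trans_le ht.2)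
  rw [add_sub_cancel] at hadd
  rw [hK.zero_eq_one] at hsum
  linarith

end IsDensityConstant

namespace IsSubselfsimilar

variable {b : ℕ → ℝ} {n : ℕ} {h K e : ℝ} {μ : Measure ℝ} [IsZeroOrProbabilityMeasure μ]

lemma measureReal_Icc_zero_le_of_Icc_one (hμ : IsSubselfsimilar b n h μ)
    (hK : IsDensityConstant b n h K) (he : 0 ≤ e)
    (hone : ∀ t ∈ Icc (0 : ℝ) 1, μ.real (Icc (1 - t) 1) ≤ K * t ^ h + e) {r : ℝ}
    (hr : r ∈ Icc 0 1) : μ.real (Icc 0 r) ≤ K * r ^ h + (1 - b n) ^ h * e := by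
  have hbn : 0 ≤ 1 - b n := sub_nonneg.2 (hK.le_one n)
  rcases hr.2.eq_or_lt with rfl | hr1
  · exact measureReal_le_one.trans
      (le_add_of_le_of_nonneg (hK.one_le_mul_rpow (by linarith [hK.last_pos])) (by positivity))
  rcases lt_or_ge r (b n) with hrn | hrn
  · rw [hμ.measureReal_Icc_zero_eq_zero hK.strictAnti.antitone hrn]
    have := hK.nonneg
    have := hr.1
    positivity
  obtain ⟨k, hrk, hkr⟩ := Nat.exists_not_and_succ_of_not_zero_of_exists (p := fun k ↦ b k ≤ r)
    (by simpa [hK.zero_eq_one] using hr1) ⟨n, hrn⟩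
  rw [not_le] at hrk
  have hk : k < n := hK.strictAnti.lt_iff_gt.1 (hrn.trans_lt hrk)
  have hgap : 0 < b k - b (k + 1) := by linarith
  have ht : (r - b (k + 1)) / (b k - b (k + 1)) ∈ Icc (0 : ℝ) 1 :=
    ⟨div_nonneg (sub_nonneg.2 hkr) hgap.le, (div_le_one hgap).2 (by linarith)⟩
  calc μ.real (Icc 0 r)
      ≤ ∑ j ∈ Finset.Ioc (k + 1) n, (b (j - 1) - b j) ^ h + (b k - b (k + 1)) ^ h *
          (K * ((r - b (k + 1)) / (b k - b (k + 1))) ^ h + e) :=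
        (hμ.measureReal_Icc_zero_le_sum_add hK.strictAnti hk hrk).trans (by grw [hone _ ht])
    _ = ∑ j ∈ Finset.Ioc (k + 1) n, (b (j - 1) - b j) ^ h + K * (r - b (k + 1)) ^ h +
          (b k - b (k + 1)) ^ h * e := by
        rw [rpow_mul_div_rpow_add hgap (sub_nonneg.2 hkr), add_assoc]
    _ ≤ K * r ^ h + (1 - b n) ^ h * e :=
        add_le_add (hK.sum_left_pieces_add_le hk ⟨hkr, hr.2⟩)
          (mul_le_mul_of_nonneg_right (hK.gap_rpow_le hk) he)

lemma measureReal_Icc_one_le_of_Icc_zero (hμ : IsSubselfsimilar b n h μ)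
    (hK : IsDensityConstant b n h K) (he : 0 ≤ e)
    (hzero : ∀ r ∈ Icc (0 : ℝ) 1, μ.real (Icc 0 r) ≤ K * r ^ h + e) {t : ℝ}
    (ht : t ∈ Icc 0 1) : μ.real (Icc (1 - t) 1) ≤ K * t ^ h + (1 - b n) ^ h * e := by
  have hbn : 0 ≤ 1 - b n := sub_nonneg.2 (hK.le_one n)
  rcases le_or_gt (1 - t) (b n) with htn | htn
  · exact measureReal_le_one.trans
      (le_add_of_le_of_nonneg (hK.one_le_mul_rpow (by linarith)) (by positivity))
  obtain ⟨k, htk, hkt⟩ := Nat.exists_not_and_succ_of_not_zero_of_exists (p := fun k ↦ b k < 1 - t)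
    (by simpa [hK.zero_eq_one] using ht.1) ⟨n, htn⟩
  rw [not_lt] at htk
  have hk : k < n := hK.strictAnti.lt_iff_gt.1 (htn.trans_le htk)
  have hgap : 0 < b k - b (k + 1) := by linarith
  have hy : 0 ≤ b k - (1 - t) := sub_nonneg.2 htk
  have hr : (b k - (1 - t)) / (b k - b (k + 1)) ∈ Icc (0 : ℝ) 1 :=
    ⟨div_nonneg hy hgap.le, (div_le_one hgap).2 (by linarith)⟩
  calc μ.real (Icc (1 - t) 1)
      ≤ ∑ j ∈ Finset.Ioc 0 k, (b (j - 1) - b j) ^ h + (b k - b (k + 1)) ^ h *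
          (K * ((b k - (1 - t)) / (b k - b (k + 1))) ^ h + e) :=
        (hμ.measureReal_Icc_one_le_sum_add hK.strictAnti hk hkt).trans (by grw [hzero _ hr])
    _ = ∑ j ∈ Finset.Ioc 0 k, (b (j - 1) - b j) ^ h + K * (t - (1 - b k)) ^ h +
          (b k - b (k + 1)) ^ h * e := by
        rw [rpow_mul_div_rpow_add hgap hy, add_assoc, sub_sub_eq_add_sub, sub_sub_eq_add_sub,
          add_comm t]
    _ ≤ K * t ^ h + (1 - b n) ^ h * e :=
        add_le_add (hK.sum_right_pieces_add_le hk.le ⟨by linarith, ht.2⟩)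
          (mul_le_mul_of_nonneg_right (hK.gap_rpow_le hk) he)

lemma measureReal_end_intervals_le_add_pow (hμ : IsSubselfsimilar b n h μ)
    (hK : IsDensityConstant b n h K) (l : ℕ) :
    (∀ r ∈ Icc (0 : ℝ) 1, μ.real (Icc 0 r) ≤ K * r ^ h + ((1 - b n) ^ h) ^ l) ∧
      ∀ t ∈ Icc (0 : ℝ) 1, μ.real (Icc (1 - t) 1) ≤ K * t ^ h + ((1 - b n) ^ h) ^ l := by
  induction l with
  | zero =>
    have htrivial : ∀ (A : Set ℝ), ∀ r ∈ Icc (0 : ℝ) 1, μ.real A ≤ K * r ^ h + 1 := fun A r hr ↦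
      measureReal_le_one.trans
        (le_add_of_nonneg_left (mul_nonneg hK.nonneg (Real.rpow_nonneg hr.1 h)))
    simp only [pow_zero]
    exact ⟨fun r ↦ htrivial _ r, fun t ↦ htrivial _ t⟩
  | succ l ih =>
    have he : 0 ≤ ((1 - b n) ^ h) ^ l :=
      pow_nonneg (Real.rpow_nonneg (sub_nonneg.2 (hK.le_one n)) h) l
    simp only [pow_succ']
    exact ⟨fun r ↦ hμ.measureReal_Icc_zero_le_of_Icc_one hK he ih.2,
      fun t ↦ hμ.measureReal_Icc_one_le_of_Icc_zero hK he ih.1⟩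

theorem measureReal_Icc_zero_le (hμ : IsSubselfsimilar b n h μ) (hK : IsDensityConstant b n h K)
    {r : ℝ} (hr : r ∈ Icc 0 1) : μ.real (Icc 0 r) ≤ K * r ^ h := by
  have hbn : 0 ≤ 1 - b n := sub_nonneg.2 (hK.le_one n)
  have hlt : (1 - b n) ^ h < 1 :=
    Real.rpow_lt_one hbn (by linarith [hK.last_pos]) hK.exponent_pos
  have hlim := (tendsto_pow_atTop_nhds_zero_of_lt_one (by positivity) hlt).const_add (K * r ^ h)
  rw [add_zero] at hlim
  exact ge_of_tendsto' hlim fun l ↦ (hμ.measureReal_end_intervals_le_add_pow hK l).1 r hr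

end IsSubselfsimilar

theorem iSup_normMeas_div_le {b h : ℕ → ℝ} {n : ℕ} {K : ℝ}
    (hK : IsDensityConstant b n (h n) K) :
    ⨆ r ∈ Ioo (0 : ℝ) 1, normMeas (gAff b) h n (Icc 0 r) / ENNReal.ofReal (r ^ h n) ≤
      ENNReal.ofReal K := by
  refine iSup₂_le fun r hr ↦ ENNReal.div_le_of_le_mul ?_
  have hμ := isSubselfsimilar_cond_hausdorffMeasure hK.strictAnti hK.zero_eq_one hK.last_pos.le
    hK.exponent_pos.le
  rw [normMeas_eq_cond _ _ _ measurableSet_Icc, ← ENNReal.ofReal_mul hK.nonneg,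
    ← ofReal_measureReal]
  exact ENNReal.ofReal_le_ofReal (hμ.measureReal_Icc_zero_le hK (Ioo_subset_Icc_self hr))

section Asymptotics

variable {b h : ℕ → ℝ}

lemma tendsto_rpow_one_of_tendsto_mul_log {ι : Type*} {l : Filter ι} {x s : ι → ℝ}
    (hx : ∀ᶠ i in l, 0 < x i) (hlog : Tendsto (fun i ↦ s i * Real.log (x i)) l (𝓝 0)) :
    Tendsto (fun i ↦ x i ^ s i) l (𝓝 1) := by
  have hexp := (Real.continuous_exp.tendsto 0).comp hlog
  rw [Real.exp_zero] at hexp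
  refine hexp.congr' (hx.mono fun i hi ↦ ?_)
  simp only [Function.comp_apply, Real.rpow_def_of_pos hi, mul_comm]

lemma one_sub_moran_exponents_isBigO (hb0 : b 0 = 1) (hb : StrictAnti b) (hbpos : ∀ k, 0 < b k)
    (hmoran : ∀ᶠ n in atTop, ∑ k ∈ Finset.Ioc 0 n, (b (k - 1) - b k) ^ h n = 1) :
    (fun n ↦ 1 - h n) =O[atTop] b := by
  have hb1 : b 1 < 1 := hb0 ▸ hb one_pos
  have hentropy : 0 < (1 - b 1).negMulLog := by
    rw [Real.negMulLog, neg_mul_comm]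
    exact mul_pos (sub_pos.2 hb1)
      (neg_pos.2 (Real.log_neg (sub_pos.2 hb1) (by linarith [hbpos 1])))
  refine Asymptotics.IsBigO.of_bound (1 - b 1).negMulLog⁻¹ ?_
  filter_upwards [hmoran, eventually_gt_atTop 0] with n hn hn0
  have hle := moran_exponent_le_one hb hb0 (hbpos n) hn
  rw [Real.norm_of_nonneg (sub_nonneg.2 hle), Real.norm_of_nonneg (hbpos n).le, inv_mul_eq_div,
    le_div_iff₀ hentropy]
  exact one_sub_moran_exponent_mul_le hb hb0 hn0 (hbpos n) hn

lemma tendsto_rpow_moran_exponents_sub_one (hbpos : ∀ k, 0 < b k)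
    (hblim : Tendsto b atTop (𝓝 0)) (hh : (fun n ↦ 1 - h n) =O[atTop] b) :
    Tendsto (fun n ↦ b n ^ (h n - 1)) atTop (𝓝 1) := by
  refine tendsto_rpow_one_of_tendsto_mul_log (Eventually.of_forall hbpos) ?_
  have hlim : Tendsto (fun n ↦ b n * Real.log (b n)) atTop (𝓝 0) := by
    simpa only [Function.comp_def, zero_mul] using
      (Real.continuous_mul_log.tendsto 0).comp hblim
  have hbig : (fun n ↦ (h n - 1) * Real.log (b n)) =O[atTop] fun n ↦ b n * Real.log (b n) :=
    (hh.neg_left.congr_left fun n ↦ neg_sub 1 (h n)).mul (Asymptotics.isBigO_refl _ _)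
  exact hbig.trans_tendsto hlim

lemma eventually_isDensityConstant (hb0 : b 0 = 1) (hb : StrictAnti b)
    (hblim : Tendsto b atTop (𝓝 0))
    (hmoran : ∀ᶠ n in atTop, ∑ k ∈ Finset.Ioc 0 n, (b (k - 1) - b k) ^ h n = 1)
    (hC1 : Tendsto (fun n : ℕ ↦ (1 - h n) * Real.log n) atTop (𝓝 0)) {K : ℝ} (hK : 1 < K) :
    ∀ᶠ n in atTop, IsDensityConstant b n (h n) K := by
  have hbpos : ∀ k, 0 < b k := fun k ↦
    (hb.antitone.le_of_tendsto hblim (k + 1)).trans_lt (hb k.lt_succ_self)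
  have hb1 : 0 < 1 - b 1 := sub_pos.2 (hb0 ▸ hb one_pos)
  have hbigO := one_sub_moran_exponents_isBigO hb0 hb hbpos hmoran
  have hh : Tendsto h atTop (𝓝 1) := by
    simpa using (hbigO.trans_tendsto hblim).const_sub 1
  have hcard : Tendsto (fun n : ℕ ↦ (n : ℝ) ^ (1 - h n)) atTop (𝓝 1) :=
    tendsto_rpow_one_of_tendsto_mul_log
      ((eventually_gt_atTop 0).mono fun n hn ↦ Nat.cast_pos.2 hn) hC1
  have hprod := hcard.mul (tendsto_rpow_moran_exponents_sub_one hbpos hblim hbigO)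
  have hhK : 1 * 1 < 1 * K := by simpa using hK
  filter_upwards [hmoran, hh.eventually_const_lt one_pos, hblim.eventually_le_const hb1,
    hprod.eventually_lt (hh.mul_const K) hhK] with n hn hpos hlast hlt
  exact ⟨hb, hb0, hbpos n, hlast, hpos, hn, hlt.le⟩

end Asymptotics

theorem linear_density_near_zero_general
    (b : ℕ → ℝ) (h : ℕ → ℝ)
    (hb0 : b 0 = 1) (hbanti : StrictAnti b)
    (hblim : Tendsto b atTop (𝓝 0))
    (hmoran : ∀ n, 1 ≤ n → ∑ k ∈ Finset.Icc 1 n, (b (k - 1) - b k) ^ h n = 1)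
    (hC1 : Tendsto (fun n : ℕ ↦ (1 - h n) * Real.log n) atTop (𝓝 0)) :
    limsup
      (fun n : ℕ ↦ ⨆ r ∈ Ioo (0 : ℝ) 1,
        normMeas (gAff b) h n (Icc 0 r) / ENNReal.ofReal (r ^ h n))
      atTop ≤ 1 := by
  have hmoran' : ∀ᶠ n in atTop, ∑ k ∈ Finset.Ioc 0 n, (b (k - 1) - b k) ^ h n = 1 :=
    (eventually_ge_atTop 1).mono hmoran
  refine ENNReal.le_of_forall_pos_le_add fun ε hε _ ↦ ?_
  have hK : (1 : ℝ) < 1 + ε := lt_add_of_pos_right 1 hε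
  refine limsup_le_of_le (by isBoundedDefault) ?_
  filter_upwards [eventually_isDensityConstant hb0 hbanti hblim hmoran' hC1 hK] with n hn
  refine (iSup_normMeas_div_le hn).trans_eq ?_
  rw [ENNReal.ofReal_add zero_le_one ε.coe_nonneg, ENNReal.ofReal_one, ENNReal.ofReal_coe_nnreal]

/-- In the linear setting, under (C1) and (C2),
    `limsup_{n→∞} sup{ m_n([0,r])/r^{h_n} : r ∈ (0,1) } ≤ 1`. -/
theorem linear_density_near_zero
    (b : ℕ → ℝ) (h : ℕ → ℝ)
    (hb0 : b 0 = 1) (hbanti : StrictAnti b)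
    (hblim : Filter.Tendsto b Filter.atTop (nhds 0))
    (hmoran : ∀ n, 1 ≤ n → ∑ k ∈ Finset.Icc 1 n, (b (k - 1) - b k) ^ h n = 1)
    (hdimH : ∀ n, 1 ≤ n → dimH (limitSet (gAff b) n) = ENNReal.ofReal (h n))
    (hC1 : Filter.Tendsto (fun n : ℕ => (1 - h n) * Real.log n) Filter.atTop (nhds 0))
    (hC2 : ∃ M : ℝ, ∀ k : ℕ, (b k - b (k + 1)) / b (k + 1) ≤ M) :
    Filter.limsup
      (fun n : ℕ => ⨆ r ∈ Set.Ioo (0 : ℝ) 1,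
        normMeas (gAff b) h n (Set.Icc 0 r) / ENNReal.ofReal (r ^ h n))
      Filter.atTop ≤ 1 :=
  linear_density_near_zero_general b h hb0 hbanti hblim hmoran hC1
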